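/- Let γ be a time optimal trajectory of (Σ) on [a,b]. If the associated control satisfies u = ε almost everywhere on [a,b] for a constant ε ∈ {−1, 1} (a bang arc), then b − a < 2π. If u = 0 almost everywhere on [a,b] (a singular arc), then b − a < 2π/cos α. -/

import Mathlib

/-!
A constant control `c` moves `γ` along the one-parameter group `t ↦ exp (t (f + c g))`. Since
`f + c g` is skew, `(f + c g) ^ 3 = -w ^ 2 (f + c g)` with `w = ‖f + c g‖`, so Rodrigues' formula
makes this group `2π / w`-periodic. An arc of length at least `2π / w` therefore returns to its
starting point, and deleting the loop joins the same endpoints in strictly less time.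
-/

open Real MeasureTheory intervalIntegral Matrix

/-- The drift matrix `f = cos α · ![![0,1,0],![-1,0,0],![0,0,0]]`. -/
noncomputable def fM (α : ℝ) : Matrix (Fin 3) (Fin 3) ℝ :=
  Real.cos α • !![0,1,0; -1,0,0; 0,0,0]

/-- The controlled matrix `g = sin α · ![![0,0,0],![0,0,1],![0,-1,0]]`. -/
noncomputable def gM (α : ℝ) : Matrix (Fin 3) (Fin 3) ℝ :=
  Real.sin α • !![0,0,0; 0,0,1; 0,-1,0]

/-- An admissible pair for `(Σ)` on `[a,b]`: a measurable control `u : [a,b] → [-1,1]`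
together with an absolutely continuous curve `γ : [a,b] → SO(3)` solving
`γ' = γ·(f + u·g)` a.e. (expressed in integral form, entrywise). -/
structure AdmissiblePair (α a b : ℝ) (γ : ℝ → Matrix (Fin 3) (Fin 3) ℝ) (u : ℝ → ℝ) : Prop where
  hab : a ≤ b
  humeas : Measurable u
  hubound : ∀ t ∈ Set.Icc a b, |u t| ≤ 1
  hso3 : ∀ t ∈ Set.Icc a b, γ t * (γ t).transpose = 1 ∧ (γ t).det = 1
  hcont : ContinuousOn γ (Set.Icc a b)
  hode : ∀ t ∈ Set.Icc a b, ∀ i j,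
    γ t i j = γ a i j + ∫ s in a..t, (γ s * (fM α + u s • gM α)) i j

/-- Time optimality for `(Σ)`. -/
def TimeOptimal (α a b : ℝ) (γ : ℝ → Matrix (Fin 3) (Fin 3) ℝ) (u : ℝ → ℝ) : Prop :=
  AdmissiblePair α a b γ u ∧
  ∀ a' b' γ' u', AdmissiblePair α a' b' γ' u' →
    γ' a' = γ a → γ' b' = γ b → b - a ≤ b' - a'

/-- `t` is a switching time of the control `u : [a,b] → [-1,1]`: in no neighbourhood of `t`
is `u` a.e. equal to a constant `c ∈ {-1,1}`. -/
def IsSwitching (a b : ℝ) (u : ℝ → ℝ) (t : ℝ) : Prop :=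
  t ∈ Set.Icc a b ∧ ∀ ε > 0, ¬ ∃ c : ℝ, (c = 1 ∨ c = -1) ∧
    ∀ᵐ s ∂(volume.restrict (Set.Ioo (t - ε) (t + ε) ∩ Set.Icc a b)), u s = c

section PeriodicExponential

variable {𝔸 : Type*} [NormedRing 𝔸] [NormedAlgebra ℝ 𝔸] [CompleteSpace 𝔸]

theorem eq_mul_exp_of_hasDerivWithinAt {γ : ℝ → 𝔸} {X : 𝔸} {s : Set ℝ} (hs : Convex ℝ s)
    (hγ : ∀ t ∈ s, HasDerivWithinAt γ (γ t * X) s t) {t₀ t : ℝ} (ht₀ : t₀ ∈ s) (ht : t ∈ s) :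
    γ t = γ t₀ * NormedSpace.exp ((t - t₀) • X) := by
  have hexp (r : ℝ) : HasDerivAt (fun r => NormedSpace.exp ((t - r) • X))
      (-(X * NormedSpace.exp ((t - r) • X))) r := by
    simpa using (hasDerivAt_exp_smul_const' X (t - r)).comp_const_sub t r
  have hderiv (r : ℝ) (hr : r ∈ s) :
      HasDerivWithinAt (fun r => γ r * NormedSpace.exp ((t - r) • X)) 0 s r :=
    ((hγ r hr).mul (hexp r).hasDerivWithinAt).congr_deriv (by noncomm_ring)
  have hconst := hs.norm_image_sub_le_of_norm_hasDerivWithin_le hderiv (by simp) ht₀ ht (C := 0)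
  simpa [sub_eq_zero] using hconst

theorem exp_smul_eq_of_pow_three {X : 𝔸} {w : ℝ} (hw : w ≠ 0) (hX : X ^ 3 = -(w ^ 2) • X)
    (t : ℝ) :
    NormedSpace.exp (t • X) = 1 + (sin (w * t) / w) • X + ((1 - cos (w * t)) / w ^ 2) • X ^ 2 := by
  set R : ℝ → 𝔸 := fun s => 1 + (sin (w * s) / w) • X + ((1 - cos (w * s)) / w ^ 2) • X ^ 2 with hR
  have hRX (s : ℝ) : R s * X = cos (w * s) • X + (sin (w * s) / w) • X ^ 2 := by
    simp only [hR, add_mul, one_mul, smul_mul_assoc, ← pow_succ, ← pow_two, hX, Nat.reduceAdd]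
    match_scalars <;> field_simp
    ring
  have hderiv (s : ℝ) : HasDerivAt R (R s * X) s := by
    have hlin : HasDerivAt (fun r => w * r) w s := by simpa using (hasDerivAt_id s).const_mul w
    have hsin : HasDerivAt (fun r => sin (w * r) / w) (cos (w * s)) s :=
      (hlin.sin.div_const w).congr_deriv (by field_simp)
    have hcos : HasDerivAt (fun r => (1 - cos (w * r)) / w ^ 2) (sin (w * s) / w) s :=
      ((hlin.cos.const_sub 1).div_const (w ^ 2)).congr_deriv (by field_simp)
    rw [hRX]
    exact ((hsin.smul_const X).const_add 1).add (hcos.smul_const (X ^ 2))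
  have hsol := eq_mul_exp_of_hasDerivWithinAt convex_univ
    (fun s _ => (hderiv s).hasDerivWithinAt) (Set.mem_univ 0) (Set.mem_univ t)
  simpa [hR] using hsol.symm

theorem exp_two_pi_div_smul_eq_one {X : 𝔸} {w : ℝ} (hw : w ≠ 0) (hX : X ^ 3 = -(w ^ 2) • X) :
    NormedSpace.exp ((2 * π / w) • X) = 1 := by
  rw [exp_smul_eq_of_pow_three hw hX, mul_div_cancel₀ _ hw]
  simp

end PeriodicExponential

theorem hasDerivWithinAt_of_entry_eq_integral {m n : Type*} [Finite m] [Finite n]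
    {γ F : ℝ → Matrix m n ℝ} {a b : ℝ} (hF : ContinuousOn F (Set.Icc a b))
    (hγ : ∀ t ∈ Set.Icc a b, ∀ i j, γ t i j = γ a i j + ∫ s in a..t, F s i j) :
    ∀ t ∈ Set.Icc a b, HasDerivWithinAt γ (F t) (Set.Icc a b) t := by
  intro t ht
  cases nonempty_fintype m
  cases nonempty_fintype n
  have : Fact (t ∈ Set.Icc a b) := ⟨ht⟩
  have ha : a ∈ Set.Icc a b := Set.left_mem_Icc.2 (ht.1.trans ht.2)
  refine hasDerivWithinAt_pi.2 fun i => hasDerivWithinAt_pi.2 fun j => ?_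
  have hFij : ContinuousOn (fun s => F s i j) (Set.Icc a b) :=
    (continuous_id.matrix_elem i j).comp_continuousOn hF
  have hint : HasDerivWithinAt (fun s => ∫ r in a..s, F r i j) (F t i j) (Set.Icc a b) t :=
    integral_hasDerivWithinAt_right (hFij.mono (Set.uIcc_subset_Icc ha ht)).intervalIntegrable
      (hFij.stronglyMeasurableAtFilter_nhdsWithin measurableSet_Icc t) (hFij t ht)
  exact (hint.const_add (γ a i j)).congr (fun s hs => hγ s hs i j) (hγ t ht i j)

theorem skewSymmetric_fin_three_pow_three {R : Type*} [CommRing R] (p q r : R) :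
    !![0, p, q; -p, 0, r; -q, -r, 0] ^ 3 =
      -(p ^ 2 + q ^ 2 + r ^ 2) • !![0, p, q; -p, 0, r; -q, -r, 0] := by
  ext i j
  fin_cases i <;> fin_cases j <;> simp [pow_three, Matrix.mul_apply, Fin.sum_univ_three] <;> ring

/-- The element `f + c g` of `𝔰𝔬(3)` that drives `(Σ)` under the constant control `c`. -/
noncomputable def generator (α c : ℝ) : Matrix (Fin 3) (Fin 3) ℝ :=
  fM α + c • gM α

/-- The angular speed `‖f + c g‖` of the rotations `t ↦ exp (t (f + c g))`, where the norm on
`𝔰𝔬(3)` is that of the axis vector. -/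
noncomputable def angularSpeed (α c : ℝ) : ℝ :=
  √(cos α ^ 2 + (c * sin α) ^ 2)

theorem generator_eq (α c : ℝ) :
    generator α c = !![0, cos α, 0; -cos α, 0, c * sin α; 0, -(c * sin α), 0] := by
  ext i j
  fin_cases i <;> fin_cases j <;> simp [generator, fM, gM]

theorem generator_pow_three (α c : ℝ) :
    generator α c ^ 3 = -(angularSpeed α c ^ 2) • generator α c := by
  have hsq : angularSpeed α c ^ 2 = cos α ^ 2 + 0 ^ 2 + (c * sin α) ^ 2 := by
    rw [angularSpeed, sq_sqrt (by positivity)]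
    ring
  rw [hsq, generator_eq]
  simpa only [neg_zero] using skewSymmetric_fin_three_pow_three (cos α) 0 (c * sin α)

open scoped Matrix.Norms.Operator in
theorem exp_period_smul_generator {α c : ℝ} (hc : angularSpeed α c ≠ 0) :
    NormedSpace.exp ((2 * π / angularSpeed α c) • generator α c) = 1 :=
  exp_two_pi_div_smul_eq_one hc (generator_pow_three α c)

theorem angularSpeed_eq_one {ε : ℝ} (α : ℝ) (hε : ε ^ 2 = 1) : angularSpeed α ε = 1 := by
  simp [angularSpeed, mul_pow, hε]

theorem angularSpeed_zero {α : ℝ} (hα : 0 ≤ cos α) : angularSpeed α 0 = cos α := by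
  simp [angularSpeed, sqrt_sq hα]

namespace AdmissiblePair

variable {α a b : ℝ} {γ : ℝ → Matrix (Fin 3) (Fin 3) ℝ} {u : ℝ → ℝ}

theorem intervalIntegrable (h : AdmissiblePair α a b γ u) {s t : ℝ} (hs : s ∈ Set.Icc a b)
    (ht : t ∈ Set.Icc a b) (i j : Fin 3) :
    IntervalIntegrable (fun r => (γ r * (fM α + u r • gM α)) i j) volume s t := by
  have hentry (M : Matrix (Fin 3) (Fin 3) ℝ) :
      IntegrableOn (fun r => (γ r * M) i j) (Set.Icc a b) :=
    (((continuous_id.matrix_mul continuous_const).matrix_elem i j).comp_continuousOn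
      h.hcont).integrableOn_Icc
  have hcontrol : IntegrableOn (fun r => u r * (γ r * gM α) i j) (Set.Icc a b) :=
    (hentry (gM α)).bdd_mul h.humeas.aestronglyMeasurable
      (ae_restrict_of_forall_mem measurableSet_Icc h.hubound)
  refine IntegrableOn.intervalIntegrable (.mono_set ?_ (Set.uIcc_subset_Icc hs ht))
  refine ((hentry (fM α)).add hcontrol).congr (.of_forall fun r => ?_)
  simp [mul_add]

theorem restrict (h : AdmissiblePair α a b γ u) {s t : ℝ} (has : a ≤ s) (hst : s ≤ t)
    (htb : t ≤ b) : AdmissiblePair α s t γ u where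
  hab := hst
  humeas := h.humeas
  hubound r hr := h.hubound r (Set.Icc_subset_Icc has htb hr)
  hso3 r hr := h.hso3 r (Set.Icc_subset_Icc has htb hr)
  hcont := h.hcont.mono (Set.Icc_subset_Icc has htb)
  hode r hr i j := by
    have ha : a ∈ Set.Icc a b := Set.left_mem_Icc.2 h.hab
    have hs : s ∈ Set.Icc a b := ⟨has, hst.trans htb⟩
    have hr' : r ∈ Set.Icc a b := Set.Icc_subset_Icc has htb hr
    rw [h.hode r hr', h.hode s hs, add_assoc, integral_add_adjacent_intervals
      (h.intervalIntegrable ha hs i j) (h.intervalIntegrable hs hr' i j)]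

open scoped Matrix.Norms.Operator in
theorem eq_mul_exp (h : AdmissiblePair α a b γ u) {c : ℝ}
    (hu : ∀ᵐ t ∂(volume.restrict (Set.Icc a b)), u t = c) :
    ∀ t ∈ Set.Icc a b, γ t = γ a * NormedSpace.exp ((t - a) • generator α c) := by
  have ha : a ∈ Set.Icc a b := Set.left_mem_Icc.2 h.hab
  have hode : ∀ t ∈ Set.Icc a b, ∀ i j,
      γ t i j = γ a i j + ∫ s in a..t, (γ s * generator α c) i j := by
    intro t ht i j
    rw [h.hode t ht]
    congr 1
    refine integral_congr_ae_restrict (ae_restrict_of_ae_restrict_of_subset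
      (Set.uIoc_subset_uIcc.trans (Set.uIcc_subset_Icc ha ht)) (hu.mono ?_))
    rintro s rfl
    rfl
  intro t ht
  exact eq_mul_exp_of_hasDerivWithinAt (convex_Icc a b)
    (hasDerivWithinAt_of_entry_eq_integral (h.hcont.mul continuousOn_const) hode) ha ht

theorem apply_add_period (h : AdmissiblePair α a b γ u) {c : ℝ} (hc : 0 < angularSpeed α c)
    (hu : ∀ᵐ t ∂(volume.restrict (Set.Icc a b)), u t = c)
    (hb : a + 2 * π / angularSpeed α c ≤ b) : γ (a + 2 * π / angularSpeed α c) = γ a := by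
  rw [h.eq_mul_exp hu _ ⟨le_add_of_nonneg_right (by positivity), hb⟩, add_sub_cancel_left,
    exp_period_smul_generator hc.ne', mul_one]

end AdmissiblePair

theorem TimeOptimal.apply_ne_apply_left {α a b : ℝ} {γ : ℝ → Matrix (Fin 3) (Fin 3) ℝ} {u : ℝ → ℝ}
    (hopt : TimeOptimal α a b γ u) {t : ℝ} (ht : t ∈ Set.Ioc a b) : γ t ≠ γ a := by
  intro hreturn
  have hshorter : b - a ≤ b - t :=
    hopt.2 t b γ u (hopt.1.restrict ht.1.le ht.2 le_rfl) hreturn rfl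
  linarith [ht.1]

theorem bang_singular_duration_general {α a b c : ℝ} {γ : ℝ → Matrix (Fin 3) (Fin 3) ℝ}
    {u : ℝ → ℝ} (hopt : TimeOptimal α a b γ u) (hc : 0 < angularSpeed α c)
    (hu : ∀ᵐ t ∂(volume.restrict (Set.Icc a b)), u t = c) :
    b - a < 2 * π / angularSpeed α c := by
  by_contra! hlong
  have hT : 0 < 2 * π / angularSpeed α c := by positivity
  have hb : a + 2 * π / angularSpeed α c ≤ b := by linarith
  exact hopt.apply_ne_apply_left ⟨lt_add_of_pos_right a hT, hb⟩ (hopt.1.apply_add_period hc hu hb)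

/-- A bang arc of a time optimal trajectory lasts less than `2π`; a singular arc lasts
less than `2π / cos α`. -/
theorem bang_singular_duration (α a b : ℝ) (γ : ℝ → Matrix (Fin 3) (Fin 3) ℝ) (u : ℝ → ℝ)
    (hα : α ∈ Set.Ioo 0 (π / 2)) (hopt : TimeOptimal α a b γ u) :
    (∀ ε : ℝ, (ε = 1 ∨ ε = -1) →
      (∀ᵐ t ∂(volume.restrict (Set.Icc a b)), u t = ε) → b - a < 2 * π) ∧
    ((∀ᵐ t ∂(volume.restrict (Set.Icc a b)), u t = 0) → b - a < 2 * π / Real.cos α) := by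
  have hcos : 0 < cos α := cos_pos_of_mem_Ioo ⟨by linarith [hα.1, pi_pos], hα.2⟩
  refine ⟨fun ε hε hu => ?_, fun hu => ?_⟩
  · have hspeed := angularSpeed_eq_one α (by simpa using hε)
    simpa [hspeed] using bang_singular_duration_general hopt (c := ε) (by simp [hspeed]) hu
  · have hspeed := angularSpeed_zero hcos.le
    simpa only [hspeed] using bang_singular_duration_general hopt (c := 0) (by rwa [hspeed]) hu
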